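/- Let L, N be a lightlike frame along the unit-speed spacelike curve γ̂ with α_L(0) ≠ 0, set x_L = γ̂(0) + L(0)/α_L(0), g_L(u) = ⟨γ̂(u) − x_L, γ̂(u) − x_L⟩ and β_L(u) = ⟨L(u), γ̂(u) − x_L⟩. If g_L^{(l)}(0) = 0 for l = 1, …, k, then β_L^{(l)}(0) = 0 for l = 1, …, k. -/

import Mathlib

open scoped Topology

noncomputable section

/-- Points/vectors of Lorentz–Minkowski 3-space `ℝ³₁`. -/
abbrev R3 : Type := Fin 3 → ℝ

/-- The Lorentz–Minkowski scalar product `⟨x,y⟩ = -x₀y₀ + x₁y₁ + x₂y₂`. -/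
def mink (x y : R3) : ℝ := -(x 0 * y 0) + x 1 * y 1 + x 2 * y 2

/-- `(L, N)` is a lightlike frame along the unit-speed spacelike curve `γ` on `I`:
`γ, L, N` are smooth on `I`, `⟨e,e⟩ = 1` (with `e = γ'`), `⟨e,L⟩ = ⟨e,N⟩ = 0`,
`⟨L,L⟩ = ⟨N,N⟩ = 0` and `⟨L,N⟩ = 1` on `I`. -/
structure LightlikeFrame (I : Set ℝ) (γ L N : ℝ → R3) : Prop where
  smooth_gamma : ContDiffOn ℝ (⊤ : ℕ∞) γ I
  smooth_L : ContDiffOn ℝ (⊤ : ℕ∞) L I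
  smooth_N : ContDiffOn ℝ (⊤ : ℕ∞) N I
  unit_speed : ∀ u ∈ I, mink (deriv γ u) (deriv γ u) = 1
  eL : ∀ u ∈ I, mink (deriv γ u) (L u) = 0
  eN : ∀ u ∈ I, mink (deriv γ u) (N u) = 0
  LL : ∀ u ∈ I, mink (L u) (L u) = 0
  NN : ∀ u ∈ I, mink (N u) (N u) = 0
  LN : ∀ u ∈ I, mink (L u) (N u) = 1

/-- `α_L = ⟨γ'', L⟩`. -/
def alphaL (γ L : ℝ → R3) (u : ℝ) : ℝ := mink (deriv (deriv γ) u) (L u)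

/-- `α_N = ⟨γ'', N⟩`. -/
def alphaN (γ N : ℝ → R3) (u : ℝ) : ℝ := mink (deriv (deriv γ) u) (N u)

/-- `α_G = ⟨L, N'⟩`. -/
def alphaG (L N : ℝ → R3) (u : ℝ) : ℝ := mink (L u) (deriv N u)

/-- `σ_L = α_L' + α_L α_G`. -/
def sigmaL (γ L N : ℝ → R3) (u : ℝ) : ℝ :=
  deriv (alphaL γ L) u + alphaL γ L u * alphaG L N u

/-- `σ_N = α_N' - α_N α_G`. -/
def sigmaN (γ L N : ℝ → R3) (u : ℝ) : ℝ :=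
  deriv (alphaN γ N) u - alphaN γ N u * alphaG L N u

open scoped ContDiff

/-!
Fix `x` and put `g = ⟨γ - x, γ - x⟩`, `β = ⟨L, γ - x⟩`, so that `g' = 2⟨e, γ - x⟩`. Since `L' ⟂ L`,
the Frenet formula `L' = -α_L e - α_G L` turns `β' = ⟨L', γ - x⟩` into the linear equation
`β' = -(α_L / 2) g' - α_G β`. If `β` vanishes at a point where the derivatives of `g` of
orders `1, …, k` vanish, differentiating this equation shows inductively that the derivatives of `β`
up to order `k` vanish there. The point `x_L` satisfies `β(0) = 0` because `L(0)` is lightlike.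
-/

section JetVanishing

variable {𝕜 𝔸 : Type*} [NontriviallyNormedField 𝕜] [NormedRing 𝔸] [NormedAlgebra 𝕜 𝔸]
  {f p q r : 𝕜 → 𝔸} {x : 𝕜}

theorem iteratedDeriv_mul_eq_zero {n : ℕ} (hp : ContDiffAt 𝕜 n p x) (hf : ContDiffAt 𝕜 n f x)
    (hjet : ∀ j ≤ n, iteratedDeriv j f x = 0) : iteratedDeriv n (p * f) x = 0 := by
  rw [iteratedDeriv_mul hp hf]
  exact Finset.sum_eq_zero fun i _ => by rw [hjet _ (n.sub_le i), mul_zero]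

theorem iteratedDeriv_eq_zero_of_deriv_eq_add_mul {k : ℕ} (hf : ContDiffAt 𝕜 k f x)
    (hq : ContDiffAt 𝕜 k q x) (hr : ContDiffAt 𝕜 k r x) (hderiv : deriv f =ᶠ[𝓝 x] r + q * f)
    (hfx : f x = 0) (hjet : ∀ j < k, iteratedDeriv j r x = 0) :
    ∀ l ≤ k, iteratedDeriv l f x = 0 := by
  intro l
  induction l using Nat.strong_induction_on with
  | _ l ih =>
    intro hl
    obtain _ | l := l
    · rwa [iteratedDeriv_zero]
    have hle : (l : WithTop ℕ∞) ≤ k := by exact_mod_cast (Nat.le_succ l).trans hl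
    have hqf : iteratedDeriv l (q * f) x = 0 :=
      iteratedDeriv_mul_eq_zero (hq.of_le hle) (hf.of_le hle)
        fun j hj => ih j (Nat.lt_succ_of_le hj) (by omega)
    rw [iteratedDeriv_succ', hderiv.iteratedDeriv_eq,
      iteratedDeriv_add (g := q * f) (hr.of_le hle) ((hq.mul hf).of_le hle),
      hjet l hl, hqf, add_zero]

end JetVanishing

section LightlikeBasis

variable {K V : Type*} [Field K] [AddCommGroup V] [Module K V]

theorem eq_smul_add_smul_add_smul_of_unit_of_hyperbolicPair (hV : Module.finrank K V = 3)
    {B : LinearMap.BilinForm K V} (hB : B.IsSymm) {e l n : V} (hee : B e e = 1) (hel : B e l = 0)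
    (hen : B e n = 0) (hll : B l l = 0) (hnn : B n n = 0) (hln : B l n = 1) (v : V) :
    v = B v e • e + B v n • l + B v l • n := by
  have : FiniteDimensional K V := Module.finite_of_finrank_pos (by omega)
  let coords : V →ₗ[K] Fin 3 → K := LinearMap.pi ![B.flip e, B.flip n, B.flip l]
  have coords_apply (w : V) : coords w = ![B w e, B w n, B w l] := by
    ext i; fin_cases i <;> rfl
  have coords_comb (a b c : K) : coords (a • e + b • l + c • n) = ![a, b, c] := by
    simp [coords_apply, hee, hel, hen, hll, hnn, hln, hB.eq l e, hB.eq n e, hB.eq n l]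
  have coords_surjective : Function.Surjective coords := fun c =>
    ⟨c 0 • e + c 1 • l + c 2 • n, by rw [coords_comb]; ext i; fin_cases i <;> rfl⟩
  have coords_injective : Function.Injective coords :=
    (LinearMap.injective_iff_surjective_of_finrank_eq_finrank (by simp [hV])).2 coords_surjective
  exact coords_injective (by rw [coords_comb, coords_apply])

end LightlikeBasis

section Mink

/-- The Lorentz–Minkowski scalar product `mink` as a bilinear form. -/
def minkForm : LinearMap.BilinForm ℝ R3 :=
  LinearMap.mk₂ ℝ mink
    (fun x y z => by simp only [mink, Pi.add_apply]; ring)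
    (fun c x y => by simp only [mink, Pi.smul_apply, smul_eq_mul]; ring)
    (fun x y z => by simp only [mink, Pi.add_apply]; ring)
    (fun c x y => by simp only [mink, Pi.smul_apply, smul_eq_mul]; ring)

theorem minkForm_apply (x y : R3) : minkForm x y = mink x y := rfl

theorem mink_comm (x y : R3) : mink x y = mink y x := by
  simp only [mink, mul_comm]

theorem minkForm_isSymm : minkForm.IsSymm := ⟨mink_comm⟩

theorem mink_sub_left (x y z : R3) : mink (x - y) z = mink x z - mink y z := by
  simp only [← minkForm_apply, map_sub, LinearMap.sub_apply]

theorem mink_smul_left (c : ℝ) (x y : R3) : mink (c • x) y = c * mink x y := by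
  simp only [← minkForm_apply, map_smul, LinearMap.smul_apply, smul_eq_mul]

theorem mink_smul_right (c : ℝ) (x y : R3) : mink x (c • y) = c * mink x y := by
  rw [mink_comm, mink_smul_left, mink_comm]

variable {E : Type*} [NormedAddCommGroup E] [NormedSpace ℝ E]

theorem contDiffAt_mink {f g : E → R3} {n : WithTop ℕ∞} {p : E} (hf : ContDiffAt ℝ n f p)
    (hg : ContDiffAt ℝ n g p) : ContDiffAt ℝ n (fun t => mink (f t) (g t)) p :=
  (minkForm.toContinuousBilinearMap.contDiff.contDiffAt.comp p hf).clm_apply hg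

variable {f g : ℝ → R3} {u : ℝ}

theorem deriv_mink (hf : DifferentiableAt ℝ f u) (hg : DifferentiableAt ℝ g u) :
    deriv (fun t => mink (f t) (g t)) u = mink (deriv f u) (g u) + mink (f u) (deriv g u) :=
  ((minkForm.toContinuousBilinearMap.hasFDerivAt.comp_hasDerivAt u hf.hasDerivAt).clm_apply
    hg.hasDerivAt).deriv

theorem mink_deriv_left_eq_neg (hf : DifferentiableAt ℝ f u) (hg : DifferentiableAt ℝ g u) {c : ℝ}
    (hconst : ∀ᶠ t in 𝓝 u, mink (f t) (g t) = c) :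
    mink (deriv f u) (g u) = -mink (f u) (deriv g u) := by
  have hzero : deriv (fun t => mink (f t) (g t)) u = 0 := by
    rw [Filter.EventuallyEq.deriv_eq hconst, deriv_const]
  rw [deriv_mink hf hg] at hzero
  exact eq_neg_of_add_eq_zero_left hzero

end Mink

/-- The Lorentzian squared distance of the curve `γ` from `x`; the paper's `g_L` is the case
`x = x_L`. -/
def lorentzDistSq (γ : ℝ → R3) (x : R3) (u : ℝ) : ℝ := mink (γ u - x) (γ u - x)

/-- `⟨L, γ - x⟩`; the paper's `β_L` is the case `x = x_L`. -/
def betaL (γ L : ℝ → R3) (x : R3) (u : ℝ) : ℝ := mink (L u) (γ u - x)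

theorem deriv_lorentzDistSq {γ : ℝ → R3} {u : ℝ} (hγ : DifferentiableAt ℝ γ u) (x : R3) :
    deriv (lorentzDistSq γ x) u = 2 * mink (deriv γ u) (γ u - x) := by
  have hγx : DifferentiableAt ℝ (fun t => γ t - x) u := hγ.sub_const x
  change deriv (fun t => mink (γ t - x) (γ t - x)) u = _
  rw [deriv_mink hγx hγx, deriv_sub_const, mink_comm (γ u - x), two_mul]

namespace LightlikeFrame

variable {I : Set ℝ} {γ L N : ℝ → R3} {u : ℝ}

theorem contDiffAt_gamma (h : LightlikeFrame I γ L N) (hI : I ∈ 𝓝 u) : ContDiffAt ℝ ∞ γ u :=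
  h.smooth_gamma.contDiffAt hI

theorem contDiffAt_L (h : LightlikeFrame I γ L N) (hI : I ∈ 𝓝 u) : ContDiffAt ℝ ∞ L u :=
  h.smooth_L.contDiffAt hI

theorem contDiffAt_N (h : LightlikeFrame I γ L N) (hI : I ∈ 𝓝 u) : ContDiffAt ℝ ∞ N u :=
  h.smooth_N.contDiffAt hI

theorem contDiffAt_deriv_gamma (h : LightlikeFrame I γ L N) (hI : I ∈ 𝓝 u) :
    ContDiffAt ℝ ∞ (deriv γ) u :=
  (h.contDiffAt_gamma hI).derivWithin (by simp)

theorem contDiffAt_alphaL (h : LightlikeFrame I γ L N) (hI : I ∈ 𝓝 u) :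
    ContDiffAt ℝ ∞ (alphaL γ L) u :=
  contDiffAt_mink ((h.contDiffAt_deriv_gamma hI).derivWithin (by simp)) (h.contDiffAt_L hI)

theorem contDiffAt_alphaG (h : LightlikeFrame I γ L N) (hI : I ∈ 𝓝 u) :
    ContDiffAt ℝ ∞ (alphaG L N) u :=
  contDiffAt_mink (h.contDiffAt_L hI) ((h.contDiffAt_N hI).derivWithin (by simp))

theorem contDiffAt_lorentzDistSq (h : LightlikeFrame I γ L N) (hI : I ∈ 𝓝 u) (x : R3) :
    ContDiffAt ℝ ∞ (lorentzDistSq γ x) u :=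
  have hγx := (h.contDiffAt_gamma hI).sub contDiffAt_const
  contDiffAt_mink hγx hγx

theorem contDiffAt_betaL (h : LightlikeFrame I γ L N) (hI : I ∈ 𝓝 u) (x : R3) :
    ContDiffAt ℝ ∞ (betaL γ L x) u :=
  contDiffAt_mink (h.contDiffAt_L hI) ((h.contDiffAt_gamma hI).sub contDiffAt_const)

theorem eq_smul_add_smul_add_smul (h : LightlikeFrame I γ L N) (hu : u ∈ I) (v : R3) :
    v = mink v (deriv γ u) • deriv γ u + mink v (N u) • L u + mink v (L u) • N u :=
  eq_smul_add_smul_add_smul_of_unit_of_hyperbolicPair (by simp) minkForm_isSymm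
    (h.unit_speed u hu) (h.eL u hu) (h.eN u hu) (h.LL u hu) (h.NN u hu) (h.LN u hu) v

theorem deriv_L (h : LightlikeFrame I γ L N) (hI : I ∈ 𝓝 u) :
    deriv L u = -alphaL γ L u • deriv γ u - alphaG L N u • L u := by
  have hL : DifferentiableAt ℝ L u := (h.contDiffAt_L hI).differentiableAt (by simp)
  have hN : DifferentiableAt ℝ N u := (h.contDiffAt_N hI).differentiableAt (by simp)
  have he : DifferentiableAt ℝ (deriv γ) u :=
    (h.contDiffAt_deriv_gamma hI).differentiableAt (by simp)
  have hLe : mink (deriv L u) (deriv γ u) = -alphaL γ L u := by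
    rw [alphaL, mink_deriv_left_eq_neg he hL (Filter.eventually_of_mem hI h.eL), neg_neg, mink_comm]
  have hLN : mink (deriv L u) (N u) = -alphaG L N u :=
    mink_deriv_left_eq_neg hL hN (Filter.eventually_of_mem hI h.LN)
  have hLL : mink (deriv L u) (L u) = 0 := by
    rw [← self_eq_neg]
    nth_rw 2 [mink_comm]
    exact mink_deriv_left_eq_neg hL hL (Filter.eventually_of_mem hI h.LL)
  rw [h.eq_smul_add_smul_add_smul (mem_of_mem_nhds hI) (deriv L u), hLe, hLN, hLL, zero_smul,
    add_zero, neg_smul (alphaG L N u), ← sub_eq_add_neg]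

theorem deriv_betaL (h : LightlikeFrame I γ L N) (hI : I ∈ 𝓝 u) (x : R3) :
    deriv (betaL γ L x) u =
      -alphaL γ L u / 2 * deriv (lorentzDistSq γ x) u + -alphaG L N u * betaL γ L x u := by
  have hγ : DifferentiableAt ℝ γ u := (h.contDiffAt_gamma hI).differentiableAt (by simp)
  have hL : DifferentiableAt ℝ L u := (h.contDiffAt_L hI).differentiableAt (by simp)
  calc deriv (betaL γ L x) u
      = mink (deriv L u) (γ u - x) + mink (L u) (deriv γ u) := by
        rw [← deriv_sub_const (f := γ) x]
        exact deriv_mink hL (hγ.sub_const x)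
    _ = -alphaL γ L u * mink (deriv γ u) (γ u - x) - alphaG L N u * betaL γ L x u := by
        rw [mink_comm (L u), h.eL u (mem_of_mem_nhds hI), h.deriv_L hI, mink_sub_left,
          mink_smul_left, mink_smul_left, add_zero, betaL]
    _ = _ := by
        rw [deriv_lorentzDistSq hγ]
        ring

theorem betaL_gamma_add_smul_L (h : LightlikeFrame I γ L N) (hu : u ∈ I) (c : ℝ) :
    betaL γ L (γ u + c • L u) u = 0 := by
  rw [betaL, sub_add_cancel_left, ← neg_smul, mink_smul_right, h.LL u hu, mul_zero]

end LightlikeFrame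

theorem beta_derivatives_vanish_general {I : Set ℝ} {γ L N : ℝ → R3}
    (h : LightlikeFrame I γ L N) {u₀ : ℝ} (hI : I ∈ 𝓝 u₀) {x : R3}
    (hβ : betaL γ L x u₀ = 0) (k : ℕ)
    (hg : ∀ l : ℕ, 1 ≤ l → l ≤ k → deriv^[l] (lorentzDistSq γ x) u₀ = 0) :
    ∀ l ≤ k, deriv^[l] (betaL γ L x) u₀ = 0 := by
  simp only [← iteratedDeriv_eq_iterate] at hg ⊢
  have hle : (k : WithTop ℕ∞) ≤ ∞ := by exact_mod_cast le_top
  have hα : ContDiffAt ℝ ∞ (fun u => -alphaL γ L u / 2) u₀ :=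
    (h.contDiffAt_alphaL hI).neg.div_const 2
  have hg' : ContDiffAt ℝ ∞ (deriv (lorentzDistSq γ x)) u₀ :=
    (h.contDiffAt_lorentzDistSq hI x).derivWithin (by simp)
  refine iteratedDeriv_eq_zero_of_deriv_eq_add_mul (q := fun u => -alphaG L N u)
    (r := (fun u => -alphaL γ L u / 2) * deriv (lorentzDistSq γ x))
    ((h.contDiffAt_betaL hI x).of_le hle) ((h.contDiffAt_alphaG hI).neg.of_le hle)
    ((hα.mul hg').of_le hle) ?_ hβ fun j hj => ?_
  · filter_upwards [eventually_mem_nhds_iff.2 hI] with u hu using h.deriv_betaL hu x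
  · have hj' : (j : WithTop ℕ∞) ≤ ∞ := by exact_mod_cast le_top
    refine iteratedDeriv_mul_eq_zero (hα.of_le hj') (hg'.of_le hj') fun i hi => ?_
    rw [← iteratedDeriv_succ']
    exact hg (i + 1) (by omega) (by omega)

/-- With `x_L = γ̂(0) + L(0)/α_L(0)`,
`g_L(u) = ⟨γ̂(u) - x_L, γ̂(u) - x_L⟩` and `β_L(u) = ⟨L(u), γ̂(u) - x_L⟩`:
if `g_L⁽ˡ⁾(0) = 0` for `l = 1, …, k`, then `β_L⁽ˡ⁾(0) = 0` for `l = 1, …, k`. -/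
theorem beta_derivatives_vanish (a b : ℝ) (γ L N : ℝ → R3)
    (hframe : LightlikeFrame (Set.Ioo a b) γ L N)
    (h0 : (0 : ℝ) ∈ Set.Ioo a b)
    (hαL : alphaL γ L 0 ≠ 0) (k : ℕ)
    (hg : ∀ l : ℕ, 1 ≤ l → l ≤ k →
      deriv^[l] (fun u => mink (γ u - (γ 0 + (alphaL γ L 0)⁻¹ • L 0))
                               (γ u - (γ 0 + (alphaL γ L 0)⁻¹ • L 0))) 0 = 0) :
    ∀ l : ℕ, 1 ≤ l → l ≤ k →
      deriv^[l] (fun u => mink (L u) (γ u - (γ 0 + (alphaL γ L 0)⁻¹ • L 0))) 0 = 0 := by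
  intro l _ hl
  exact beta_derivatives_vanish_general hframe (isOpen_Ioo.mem_nhds h0)
    (hframe.betaL_gamma_add_smul_L h0 _) k hg l hl
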